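/- Let Φ = Q_n X_n Q_{n-1} X_{n-1} ⋯ ∀X_2 ∃X_1 ψ (n ≥ 1) be a QBF with alternating quantifiers whose innermost quantifier is ∃X_1, where ψ is propositional over the pairwise disjoint atom sets X_1,…,X_n. Let u be a fresh atom, ab ∈ Ab, φ = ψ ∨ u, and define the NATs T_0 = { : φ}, T_1 = {X_1, u : φ, u ↔ ab}, T_{2k} = {X_1,…,X_{2k}, u : T_{2k-1}, u ↔ ¬ab} for 2k ∈ {2,…,n}, and T_{2k+1} = {X_1,…,X_{2k+1}, u : T_{2k}, u ↔ ab} for 2k+1 ∈ {3,…,n}. Then for every n ≥ 1 and every truth assignment ν to X_n, T_{n-1} has some model extending ν; moreover, if n is odd then T_{n-1} ⊨ u if and only if Φ is false, and if n is even then T_{n-1} ⊨ ¬u if and only if Φ is true. -/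

import Mathlib

/-!
STATEMENT 8: the nested NATs `T₀, T₁, …` express the evaluation of an alternating QBF
`Φ = Qₙ Xₙ ⋯ ∀X₂ ∃X₁ ψ`.
-/

namespace NestedCirc

universe u
variable {α : Type u}

/-- Propositional formulas over atoms `α`. -/
inductive PForm (α : Type u) : Type u where
  | tru : PForm α
  | fls : PForm α
  | atom : α → PForm α
  | neg : PForm α → PForm α
  | conj : PForm α → PForm α → PForm α
  | disj : PForm α → PForm α → PForm α

namespace PForm

/-- Satisfaction of a propositional formula in an interpretation (set of true atoms). -/
def sat : PForm α → Set α → Prop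
  | tru, _ => True
  | fls, _ => False
  | atom a, M => a ∈ M
  | neg φ, M => ¬ φ.sat M
  | conj φ ψ, M => φ.sat M ∧ ψ.sat M
  | disj φ ψ, M => φ.sat M ∨ ψ.sat M

/-- Implication `φ → ψ`. -/
def imp (φ ψ : PForm α) : PForm α := disj (neg φ) ψ

/-- Equivalence `φ ↔ ψ`. -/
def iffF (φ ψ : PForm α) : PForm α := conj (imp φ ψ) (imp ψ φ)

/-- The atoms occurring in a formula. -/
def atoms : PForm α → Set α
  | tru => ∅
  | fls => ∅
  | atom a => {a}
  | neg φ => φ.atoms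
  | conj φ ψ => φ.atoms ∪ ψ.atoms
  | disj φ ψ => φ.atoms ∪ ψ.atoms

/-- Conjunction of a list of formulas. -/
def conjList (l : List (PForm α)) : PForm α := l.foldr conj tru

end PForm

/-- `M ≤_{P;Z} M'` : `M` agrees with `M'` on the fixed atoms `(P ∪ Z)ᶜ`
and is smaller or equal on the minimized atoms `P`. -/
def lePZ (P Z M M' : Set α) : Prop :=
  M ∩ P ⊆ M' ∩ P ∧ M ∩ (P ∪ Z)ᶜ = M' ∩ (P ∪ Z)ᶜ

/-- `M <_{P;Z} M'` (strict preference). -/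
def ltPZ (P Z M M' : Set α) : Prop := lePZ P Z M M' ∧ ¬ lePZ P Z M' M

/-- A block `{C : B₁,…,Bₘ}` of a nested abnormality theory: the described atoms `C`,
the members that are propositional formulas, and the members that are blocks. -/
inductive Block (α : Type u) : Type u where
  | mk : Set α → List (PForm α) → List (Block α) → Block α

/-- Satisfaction of a block: `M ⊨ {C : B₁,…,Bₘ}` iff some interpretation `M*` agreeing
with `M` outside `Ab` satisfies every member and is `(Ab;C)`-minimal doing so. -/
def Block.sat (Ab : Set α) : Block α → Set α → Prop
  | .mk C fs bs, M =>
      ∃ Ms : Set α, Ms ∩ Abᶜ = M ∩ Abᶜ ∧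
        ((∀ f ∈ fs, f.sat Ms) ∧ ∀ b ∈ bs, Block.sat Ab b Ms) ∧
        ∀ N : Set α, ((∀ f ∈ fs, f.sat N) ∧ ∀ b ∈ bs, Block.sat Ab b N) → ¬ ltPZ Ab C N Ms

/-- A nested abnormality theory (NAT): a finite collection of blocks. -/
abbrev NAT (α : Type u) := List (Block α)

/-- `M ⊨ T` iff `M` satisfies every block of `T`. -/
def NAT.sat (Ab : Set α) (T : NAT α) (M : Set α) : Prop := ∀ B ∈ T, Block.sat Ab B M

/-- Override `M` on the atoms `A` by the assignment `I`. -/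
def ovr (M A I : Set α) : Set α := (M \ A) ∪ (I ∩ A)

/-- `X 1 ∪ ⋯ ∪ X k`. -/
def Xup (X : ℕ → Set α) : ℕ → Set α
  | 0 => ∅
  | k + 1 => Xup X k ∪ X (k + 1)

/-- Truth of the QBF `Q_k X_k ⋯ ∀X₂ ∃X₁ ψ` relative to the partial assignment `M` of
the remaining atoms, where the quantifiers alternate and the innermost quantifier
(`k = 1`) is existential: `Q_k = ∃` for odd `k` and `Q_k = ∀` for even `k`. -/
def qbfVal (ψ : PForm α) (X : ℕ → Set α) : ℕ → Set α → Prop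
  | 0, M => ψ.sat M
  | k + 1, M =>
      if (k + 1) % 2 = 1 then ∃ I : Set α, qbfVal ψ X k (ovr M (X (k + 1)) I)
      else ∀ I : Set α, qbfVal ψ X k (ovr M (X (k + 1)) I)

/-- The NATs (single blocks) `T₀ = { : φ}`, `T₁ = {X₁, u : φ, u ↔ ab}`,
`T_{2k} = {X₁,…,X_{2k}, u : T_{2k-1}, u ↔ ¬ab}` and
`T_{2k+1} = {X₁,…,X_{2k+1}, u : T_{2k}, u ↔ ab}`, where `φ = ψ ∨ u`. -/
def Tnat (ψ : PForm α) (X : ℕ → Set α) (u ab : α) : ℕ → Block α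
  | 0 => .mk ∅ [ψ.disj (.atom u)] []
  | 1 => .mk (Xup X 1 ∪ {u}) [ψ.disj (.atom u), PForm.iffF (.atom u) (.atom ab)] []
  | j + 2 => .mk (Xup X (j + 2) ∪ {u})
      [PForm.iffF (.atom u) (if (j + 2) % 2 = 0 then .neg (.atom ab) else .atom ab)]
      [Tnat ψ X u ab (j + 1)]

/-- Agreement of two interpretations on the atoms `Xup n \ Xup k`. -/
def Agr (X : ℕ → Set α) (n k : ℕ) (M N : Set α) : Prop :=
  ∀ a, a ∈ Xup X n → a ∉ Xup X k → (a ∈ M ↔ a ∈ N)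

theorem ovr_self (M A : Set α) : ovr M A M = M := by
  ext a; simp only [ovr, Set.mem_union, Set.mem_sdiff, Set.mem_inter_iff]; tauto

theorem sat_congr (ψ : PForm α) (M N : Set α) (h : ∀ a ∈ ψ.atoms, (a ∈ M ↔ a ∈ N)) :
    ψ.sat M ↔ ψ.sat N := by
  induction ψ with
  | tru => rfl
  | fls => rfl
  | atom a => exact h a rfl
  | neg φ ih => exact not_congr (ih h)
  | conj φ χ ih1 ih2 =>
    exact and_congr (ih1 fun a ha => h a (Or.inl ha)) (ih2 fun a ha => h a (Or.inr ha))
  | disj φ χ ih1 ih2 =>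
    exact or_congr (ih1 fun a ha => h a (Or.inl ha)) (ih2 fun a ha => h a (Or.inr ha))

theorem Agr.ovr {X : ℕ → Set α} {n k : ℕ} {M N : Set α} (h : Agr X n (k + 1) M N) (I : Set α) :
    Agr X n k (ovr M (X (k + 1)) I) (ovr N (X (k + 1)) I) := by
  intro a ha hk
  have := h a ha
  simp only [Xup, NestedCirc.ovr, Set.mem_union, Set.mem_sdiff, Set.mem_inter_iff] at *
  tauto

theorem qbf_congr (ψ : PForm α) (X : ℕ → Set α) (n : ℕ) (hatoms : ψ.atoms ⊆ Xup X n) (k : ℕ) :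
    ∀ M N : Set α, Agr X n k M N → (qbfVal ψ X k M ↔ qbfVal ψ X k N) := by
  induction k with
  | zero =>
    intro M N h
    exact sat_congr ψ M N fun a ha => h a (hatoms ha) (by simp [Xup])
  | succ k ih =>
    intro M N h
    simp only [qbfVal]
    split_ifs
    · exact exists_congr fun I => ih _ _ (h.ovr I)
    · exact forall_congr' fun I => ih _ _ (h.ovr I)

/-- If `M`, `N` agree above level `k + 1`, then overriding `M` by `N` agrees with `N` above `k`. -/
theorem Agr.ovr_left {X : ℕ → Set α} {n k : ℕ} {M N : Set α} (h : Agr X n (k + 1) M N) :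
    Agr X n k (NestedCirc.ovr M (X (k + 1)) N) N := by
  have := h.ovr N
  rwa [ovr_self] at this

theorem agr_ovr (X : ℕ → Set α) (n k : ℕ) (M I : Set α) :
    Agr X n (k + 1) M (ovr M (X (k + 1)) I) := by
  intro a ha hk
  simp only [Xup, ovr, Set.mem_union, Set.mem_sdiff, Set.mem_inter_iff] at *
  tauto

/-- The inductive invariant. -/
structure Inv (Ab : Set α) (X : ℕ → Set α) (u : α) (ψ : PForm α) (n k : ℕ)
    (P : Set α → Prop) : Prop where
  inv : ∀ M N : Set α, M ∩ Abᶜ = N ∩ Abᶜ → P M → P N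
  neg : ∀ N, P N → u ∉ N → qbfVal ψ X k N
  pos : k ≠ 0 → ∀ N, P N → u ∈ N → ¬ qbfVal ψ X k N
  ex : ∀ M, ∃ N, Agr X n k M N ∧ P N ∧ (u ∈ N ↔ ¬ qbfVal ψ X k M)

theorem Inv.step {Ab : Set α} {X : ℕ → Set α} {u ab : α} {ψ : PForm α} {n k : ℕ}
    {P : Set α → Prop} (hab : ab ∈ Ab)
    (hu : u ∉ Xup X n) (hAb : Disjoint (Xup X n ∪ {u}) Ab)
    (hAt : Xup X n ∪ {u} ∪ Ab = Set.univ)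
    (hatoms : ψ.atoms ⊆ Xup X n) (H : Inv Ab X u ψ n k P)
    (S : Set α → Prop)
    (hS : ∀ M, S M ↔ P M ∧ (u ∈ M ↔ if (k + 1) % 2 = 0 then ab ∉ M else ab ∈ M))
    (Q : Set α → Prop)
    (hQ : ∀ M, Q M ↔ ∃ Ms : Set α, Ms ∩ Abᶜ = M ∩ Abᶜ ∧ S Ms ∧
      ∀ N, S N → ¬ ltPZ Ab (Xup X (k + 1) ∪ {u}) N Ms) :
    Inv Ab X u ψ n (k + 1) Q := by
  have huAb : u ∉ Ab := fun h => Set.disjoint_left.1 hAb (Or.inr rfl) h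
  have hXAb : ∀ a ∈ Xup X n, a ∉ Ab := fun a ha h => Set.disjoint_left.1 hAb (Or.inl ha) h
  have hfix : ∀ M N : Set α, M ∩ (Ab ∪ (Xup X (k + 1) ∪ {u}))ᶜ = N ∩ (Ab ∪ (Xup X (k + 1) ∪ {u}))ᶜ
      ↔ Agr X n (k + 1) M N := by
    intro M N
    constructor
    · intro h a ha hk
      have h1 := Set.ext_iff.1 h a
      have h2 : a ≠ u := fun e => hu (e ▸ ha)
      have h3 := hXAb a ha
      simp only [Set.mem_inter_iff, Set.mem_compl_iff, Set.mem_union, Set.mem_singleton_iff] at h1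
      tauto
    · intro h
      ext a
      have h1 := h a
      have h2 : a ∈ Xup X n ∪ {u} ∪ Ab := hAt ▸ Set.mem_univ a
      simp only [Set.mem_inter_iff, Set.mem_compl_iff, Set.mem_union, Set.mem_singleton_iff] at h2 ⊢
      tauto
  -- agreement outside `Ab`
  have hout : ∀ M N : Set α, M ∩ Abᶜ = N ∩ Abᶜ → ∀ a, a ∉ Ab → (a ∈ M ↔ a ∈ N) := by
    intro M N h a ha
    have h1 := Set.ext_iff.1 h a
    simp only [Set.mem_inter_iff, Set.mem_compl_iff] at h1
    tauto
  have hagr : ∀ M N : Set α, M ∩ Abᶜ = N ∩ Abᶜ → ∀ j, Agr X n j M N :=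
    fun M N h j a ha _ => hout M N h a (hXAb a ha)
  -- normalised versions of an interpretation
  have e0 : ∀ M : Set α, M ∩ Abᶜ = (M \ Ab) ∩ Abᶜ := by
    intro M; ext a; simp only [Set.mem_inter_iff, Set.mem_compl_iff, Set.mem_sdiff]; tauto
  have e1 : ∀ M : Set α, M ∩ Abᶜ = ((M \ Ab) ∪ {ab}) ∩ Abᶜ := by
    intro M; ext a
    have : a = ab → a ∈ Ab := fun h => h ▸ hab
    simp only [Set.mem_inter_iff, Set.mem_compl_iff, Set.mem_sdiff, Set.mem_union,
      Set.mem_singleton_iff]; tauto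
  -- a competitor without abnormalities
  have comp : ∀ Ms N : Set α, ab ∈ Ms → Agr X n (k + 1) N Ms →
      ltPZ Ab (Xup X (k + 1) ∪ {u}) (N \ Ab) Ms := by
    intro Ms N h1 h2
    refine ⟨⟨fun a ha => absurd ha.2 ha.1.2, (hfix _ _).2 ?_⟩, fun h => ?_⟩
    · intro a ha hk
      exact ((hagr _ _ (e0 N) (k + 1) a ha hk).symm).trans (h2 a ha hk)
    · exact (h.1 ⟨h1, hab⟩).1.2 hab
  -- minimality of normalised ones
  have min0 : ∀ N N' : Set α, ¬ ltPZ Ab (Xup X (k + 1) ∪ {u}) N' (N \ Ab) := by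
    rintro N N' ⟨⟨h1, h2⟩, h3⟩
    exact h3 ⟨fun a ha => absurd ha.2 ha.1.2, h2.symm⟩
  have min1 : ∀ N N' : Set α, ltPZ Ab (Xup X (k + 1) ∪ {u}) N' ((N \ Ab) ∪ {ab}) →
      ab ∉ N' ∧ Agr X n (k + 1) N N' := by
    rintro N N' ⟨⟨h1, h2⟩, h3⟩
    refine ⟨fun h => h3 ⟨?_, h2.symm⟩, ?_⟩
    · rintro a ⟨ha | ha, hb⟩
      · exact absurd hb ha.2
      · rw [Set.mem_singleton_iff.1 ha]; exact ⟨h, hab⟩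
    · intro a ha hk
      exact (hagr _ _ (e1 N) (k + 1) a ha hk).trans ((hfix _ _).1 h2 a ha hk).symm
  have nab0 : ∀ N : Set α, ab ∉ N \ Ab := fun N h => h.2 hab
  have yab1 : ∀ N : Set α, ab ∈ (N \ Ab) ∪ {ab} := fun N => Or.inr rfl
  have qc := qbf_congr ψ X n hatoms
  have QP : ∀ M, Q M → P M := by
    intro M hM
    obtain ⟨Ms, h1, h2, -⟩ := (hQ M).1 hM
    exact H.inv _ _ h1 ((hS _).1 h2).1
  -- from a failure of minimality
  have trans : ∀ {M N I : Set α}, Agr X n k (ovr M (X (k + 1)) I) N → Agr X n (k + 1) M N := by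
    intro M N I h a ha hk
    exact (agr_ovr X n k M I a ha hk).trans (h a ha fun h' => hk (Or.inl h'))
  have build0 : ∀ N, P N → S (N \ Ab) → Q N := fun N _ h =>
    (hQ N).2 ⟨N \ Ab, (e0 N).symm, h, fun N' _ => min0 N N'⟩
  have u0 : ∀ N : Set α, u ∈ N \ Ab ↔ u ∈ N := fun N => (hout _ _ (e0 N) u huAb).symm
  have u1 : ∀ N : Set α, u ∈ (N \ Ab) ∪ {ab} ↔ u ∈ N := fun N => (hout _ _ (e1 N) u huAb).symm
  rcases Nat.mod_two_eq_zero_or_one (k + 1) with hk | hk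
  · -- even level: universal quantifier, `u ↔ ¬ ab`
    have hk0 : k ≠ 0 := by omega
    have hS' : ∀ M, S M ↔ P M ∧ (u ∈ M ↔ ab ∉ M) := by simpa [hk] using hS
    have hv : ∀ M, qbfVal ψ X (k + 1) M ↔ ∀ I, qbfVal ψ X k (ovr M (X (k + 1)) I) := by
      intro M; simp [qbfVal, hk]
    refine ⟨?_, ?_, ?_, ?_⟩
    · intro M N h hM
      obtain ⟨Ms, h1, h2⟩ := (hQ M).1 hM
      exact (hQ N).2 ⟨Ms, h1.trans h, h2⟩
    · intro M hM hu'
      obtain ⟨Ms, h1, h2, h3⟩ := (hQ M).1 hM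
      rw [hv]
      by_contra hc
      push Not at hc
      obtain ⟨I, hI⟩ := hc
      obtain ⟨N, n1, n2, n3⟩ := H.ex (ovr M (X (k + 1)) I)
      have hab' : ab ∈ Ms := by
        by_contra h
        exact hu' ((hout _ _ h1 u huAb).1 ((((hS' _).1 h2).2).2 h))
      refine h3 (N \ Ab) ((hS' _).2 ⟨H.inv _ _ (e0 N) n2, ?_⟩) (comp Ms N hab' ?_)
      · rw [u0]; exact iff_of_true (n3.2 hI) (nab0 N)
      · intro a ha hk
        exact (trans n1 a ha hk).symm.trans (hagr _ _ h1 (k + 1) a ha hk).symm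
    · intro _ M hM hu' hq
      have := (hv M).1 hq M
      rw [ovr_self] at this
      exact H.pos hk0 M (QP M hM) hu' this
    · intro M
      by_cases hq : qbfVal ψ X (k + 1) M
      · have hq' := (hv M).1 hq
        obtain ⟨N, n1, n2, n3⟩ := H.ex (ovr M (X (k + 1)) M)
        have hun : u ∉ N := fun h => n3.1 h (hq' M)
        refine ⟨N, trans n1, ?_, iff_of_false hun (not_not.2 hq)⟩
        refine (hQ N).2 ⟨(N \ Ab) ∪ {ab}, (e1 N).symm, (hS' _).2 ⟨H.inv _ _ (e1 N) n2, ?_⟩, ?_⟩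
        · rw [u1]; exact iff_of_false hun (not_not.2 (yab1 N))
        · intro N' hN' hlt
          obtain ⟨m1, m2⟩ := min1 N N' hlt
          obtain ⟨p1, p2⟩ := (hS' _).1 hN'
          refine H.pos hk0 N' p1 (p2.2 m1) ?_
          refine (qc k _ _ (Agr.ovr_left (M := M) ?_)).1 (hq' N')
          intro a ha hk
          exact (trans n1 a ha hk).trans (m2 a ha hk)
      · have hc := hq
        rw [hv] at hc
        push Not at hc
        obtain ⟨I, hI⟩ := hc
        obtain ⟨N, n1, n2, n3⟩ := H.ex (ovr M (X (k + 1)) I)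
        refine ⟨N, trans n1, build0 N n2 ((hS' _).2 ⟨H.inv _ _ (e0 N) n2, ?_⟩),
          iff_of_true (n3.2 hI) hq⟩
        rw [u0]; exact iff_of_true (n3.2 hI) (nab0 N)
  · -- odd level: existential quantifier, `u ↔ ab`
    have hS' : ∀ M, S M ↔ P M ∧ (u ∈ M ↔ ab ∈ M) := by simpa [hk] using hS
    have hv : ∀ M, qbfVal ψ X (k + 1) M ↔ ∃ I, qbfVal ψ X k (ovr M (X (k + 1)) I) := by
      intro M; simp [qbfVal, hk]
    refine ⟨?_, ?_, ?_, ?_⟩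
    · intro M N h hM
      obtain ⟨Ms, h1, h2⟩ := (hQ M).1 hM
      exact (hQ N).2 ⟨Ms, h1.trans h, h2⟩
    · intro M hM hu'
      refine (hv M).2 ⟨M, ?_⟩
      rw [ovr_self]
      exact H.neg M (QP M hM) hu'
    · intro _ M hM hu' hq
      obtain ⟨Ms, h1, h2, h3⟩ := (hQ M).1 hM
      obtain ⟨I, hI⟩ := (hv M).1 hq
      obtain ⟨N, n1, n2, n3⟩ := H.ex (ovr M (X (k + 1)) I)
      have hab' : ab ∈ Ms := (((hS' _).1 h2).2).1 ((hout _ _ h1 u huAb).2 hu')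
      refine h3 (N \ Ab) ((hS' _).2 ⟨H.inv _ _ (e0 N) n2, ?_⟩) (comp Ms N hab' ?_)
      · rw [u0]; exact iff_of_false (fun h => n3.1 h hI) (nab0 N)
      · intro a ha hk
        exact (trans n1 a ha hk).symm.trans (hagr _ _ h1 (k + 1) a ha hk).symm
    · intro M
      by_cases hq : qbfVal ψ X (k + 1) M
      · obtain ⟨I, hI⟩ := (hv M).1 hq
        obtain ⟨N, n1, n2, n3⟩ := H.ex (ovr M (X (k + 1)) I)
        have hun : u ∉ N := fun h => n3.1 h hI
        refine ⟨N, trans n1, build0 N n2 ((hS' _).2 ⟨H.inv _ _ (e0 N) n2, ?_⟩),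
          iff_of_false hun (not_not.2 hq)⟩
        rw [u0]; exact iff_of_false hun (nab0 N)
      · have hc := hq
        rw [hv] at hc
        push Not at hc
        obtain ⟨N, n1, n2, n3⟩ := H.ex (ovr M (X (k + 1)) M)
        have hun : u ∈ N := n3.2 (hc M)
        refine ⟨N, trans n1, ?_, iff_of_true hun hq⟩
        refine (hQ N).2 ⟨(N \ Ab) ∪ {ab}, (e1 N).symm, (hS' _).2 ⟨H.inv _ _ (e1 N) n2, ?_⟩, ?_⟩
        · rw [u1]; exact iff_of_true hun (yab1 N)
        · intro N' hN' hlt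
          obtain ⟨m1, m2⟩ := min1 N N' hlt
          obtain ⟨p1, p2⟩ := (hS' _).1 hN'
          refine hc N' ?_
          refine (qc k _ _ (Agr.ovr_left (M := M) ?_)).2 (H.neg N' p1 fun h => m1 (p2.1 h))
          intro a ha hk
          exact (trans n1 a ha hk).trans (m2 a ha hk)

theorem iffF_sat (φ χ : PForm α) (M : Set α) :
    (PForm.iffF φ χ).sat M ↔ (φ.sat M ↔ χ.sat M) := by
  simp only [PForm.iffF, PForm.imp, PForm.sat]; tauto

theorem inv_zero {Ab : Set α} {X : ℕ → Set α} {u : α} {ψ : PForm α} {n : ℕ}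
    (hu : u ∉ Xup X n) (hAb : Disjoint (Xup X n ∪ {u}) Ab)
    (hatoms : ψ.atoms ⊆ Xup X n) :
    Inv Ab X u ψ n 0 (fun M => ψ.sat M ∨ u ∈ M) := by
  have huAb : u ∉ Ab := fun h => Set.disjoint_left.1 hAb (Or.inr rfl) h
  have hXAb : ∀ a ∈ Xup X n, a ∉ Ab := fun a ha h => Set.disjoint_left.1 hAb (Or.inl ha) h
  refine ⟨?_, ?_, ?_, ?_⟩
  · intro M N h
    have hout : ∀ a, a ∉ Ab → (a ∈ M ↔ a ∈ N) := by
      intro a ha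
      have h1 := Set.ext_iff.1 h a
      simp only [Set.mem_inter_iff, Set.mem_compl_iff] at h1
      tauto
    exact (or_congr (sat_congr ψ M N fun a ha => hout a (hXAb a (hatoms ha))) (hout u huAb)).1
  · intro N h hn
    exact h.resolve_right hn
  · intro h; exact absurd rfl h
  · intro M
    by_cases h : ψ.sat M
    · have hA : Agr X n 0 M (M \ {u}) := by
        intro a ha _
        have : a ≠ u := fun e => hu (e ▸ ha)
        simp [this]
      refine ⟨M \ {u}, hA, Or.inl ((qbf_congr ψ X n hatoms 0 _ _ hA).1 h), ?_⟩
      exact iff_of_false (fun h' => h'.2 rfl) (not_not.2 h)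
    · refine ⟨M ∪ {u}, ?_, Or.inr (Or.inr rfl), iff_of_true (Or.inr rfl) h⟩
      intro a ha _
      have : a ≠ u := fun e => hu (e ▸ ha)
      simp [this]

theorem block_sat_mk (Ab C : Set α) (fs : List (PForm α)) (bs : List (Block α)) (M : Set α) :
    Block.sat Ab (.mk C fs bs) M ↔ ∃ Ms : Set α, Ms ∩ Abᶜ = M ∩ Abᶜ ∧
        ((∀ f ∈ fs, f.sat Ms) ∧ ∀ b ∈ bs, Block.sat Ab b Ms) ∧
        ∀ N : Set α, ((∀ f ∈ fs, f.sat N) ∧ ∀ b ∈ bs, Block.sat Ab b N) → ¬ ltPZ Ab C N Ms := by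
  rw [Block.sat]

theorem inv_T {Ab : Set α} {X : ℕ → Set α} {u ab : α} {ψ : PForm α} {n : ℕ} (hab : ab ∈ Ab)
    (hu : u ∉ Xup X n) (hAb : Disjoint (Xup X n ∪ {u}) Ab)
    (hAt : Xup X n ∪ {u} ∪ Ab = Set.univ)
    (hatoms : ψ.atoms ⊆ Xup X n) (k : ℕ) :
    Inv Ab X u ψ n (k + 1) (Block.sat Ab (Tnat ψ X u ab (k + 1))) := by
  induction k with
  | zero =>
    refine (inv_zero hu hAb hatoms).step hab hu hAb hAt hatoms _ ?_ _
      (fun M => by rw [zero_add, Tnat]; exact block_sat_mk _ _ _ _ _)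
    intro M
    simp [iffF_sat, PForm.sat]
  | succ k ih =>
    refine ih.step hab hu hAb hAt hatoms _ ?_ _
      (fun M => by rw [Tnat]; exact block_sat_mk _ _ _ _ _)
    intro M
    simp only [List.mem_singleton, forall_eq, iffF_sat]
    refine and_comm.trans (and_congr Iff.rfl ?_)
    split_ifs <;> rfl

theorem sat_T0 {Ab : Set α} {X : ℕ → Set α} {u ab : α} {ψ : PForm α} {n : ℕ}
    (hu : u ∉ Xup X n) (hAb : Disjoint (Xup X n ∪ {u}) Ab)
    (hatoms : ψ.atoms ⊆ Xup X n) (M : Set α) :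
    Block.sat Ab (Tnat ψ X u ab 0) M ↔ (ψ.sat M ∨ u ∈ M) := by
  have hi := (inv_zero (Ab := Ab) hu hAb hatoms).inv
  rw [Tnat, block_sat_mk]
  simp only [List.mem_singleton, forall_eq, PForm.sat]
  constructor
  · rintro ⟨Ms, h1, ⟨h2, -⟩, -⟩
    exact hi _ _ h1 h2
  · intro h
    have e0 : M ∩ Abᶜ = (M \ Ab) ∩ Abᶜ := by
      ext a; simp only [Set.mem_inter_iff, Set.mem_compl_iff, Set.mem_sdiff]; tauto
    refine ⟨M \ Ab, e0.symm, ⟨hi _ _ e0 h, by simp⟩, ?_⟩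
    rintro N - ⟨⟨h1, h2⟩, h3⟩
    exact h3 ⟨fun a ha => absurd ha.2 ha.1.2, h2.symm⟩

theorem xup_disj {X : ℕ → Set α} {n : ℕ}
    (hX : ∀ i j, 1 ≤ i → i < j → j ≤ n → Disjoint (X i) (X j)) (k : ℕ) (hk : k < n) :
    Disjoint (Xup X k) (X n) := by
  induction k with
  | zero => simp [Xup]
  | succ k ih =>
    exact Set.disjoint_union_left.2 ⟨ih (by omega), hX _ _ (by omega) hk le_rfl⟩

/-- Let `Φ = Qₙ Xₙ ⋯ ∀X₂ ∃X₁ ψ` (`n ≥ 1`) be a QBF with alternating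
quantifiers whose innermost quantifier is `∃X₁`, `ψ` propositional over the pairwise
disjoint sets `X₁,…,Xₙ`, `u` fresh, `ab ∈ Ab`, and `φ = ψ ∨ u`.  Then for every
truth assignment `ν` to `Xₙ`, `T_{n-1}` has some model extending `ν`; moreover if `n`
is odd then `T_{n-1} ⊨ u` iff `Φ` is false, and if `n` is even then `T_{n-1} ⊨ ¬u`
iff `Φ` is true. -/
theorem nat_hierarchy_expresses_qbf (Ab : Set α) (X : ℕ → Set α) (u ab : α)
    (ψ : PForm α) (n : ℕ) (hn : 1 ≤ n) (hab : ab ∈ Ab)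
    (hX : ∀ i j, 1 ≤ i → i < j → j ≤ n → Disjoint (X i) (X j))
    (hu : u ∉ Xup X n) (hAb : Disjoint (Xup X n ∪ {u}) Ab)
    (hAt : Xup X n ∪ {u} ∪ Ab = Set.univ)
    (hatoms : ψ.atoms ⊆ Xup X n) :
    (∀ ν : Set α, ∃ M : Set α,
        M ∩ X n = ν ∩ X n ∧ NAT.sat Ab [Tnat ψ X u ab (n - 1)] M) ∧
    (Odd n →
      ((∀ M : Set α, NAT.sat Ab [Tnat ψ X u ab (n - 1)] M → u ∈ M) ↔
        ¬ qbfVal ψ X n ∅)) ∧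
    (Even n →
      ((∀ M : Set α, NAT.sat Ab [Tnat ψ X u ab (n - 1)] M → u ∉ M) ↔
        qbfVal ψ X n ∅)) := by
  obtain ⟨k, rfl⟩ : ∃ k, n = k + 1 := ⟨n - 1, by omega⟩
  have hd := xup_disj hX k (by omega)
  simp only [Nat.add_sub_cancel, NAT.sat, List.mem_singleton, forall_eq]
  have qc := qbf_congr ψ X (k + 1) hatoms
  obtain ⟨P, hP, H, HP⟩ : ∃ P : Set α → Prop,
      (∀ M, Block.sat Ab (Tnat ψ X u ab k) M ↔ P M) ∧ Inv Ab X u ψ (k + 1) k P ∧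
      (k % 2 = 1 → k ≠ 0) := by
    cases k with
    | zero => exact ⟨_, sat_T0 hu hAb hatoms, inv_zero hu hAb hatoms, by omega⟩
    | succ k => exact ⟨_, fun _ => Iff.rfl, inv_T hab hu hAb hAt hatoms k, by omega⟩
  simp only [hP]
  -- two interpretations always agree above the top level
  have top : ∀ M N : Set α, Agr X (k + 1) (k + 1) M N := fun M N a h1 h2 => absurd h1 h2
  refine ⟨?_, ?_, ?_⟩
  · intro ν
    obtain ⟨N, n1, n2, -⟩ := H.ex ν
    refine ⟨N, ?_, n2⟩
    ext a
    have h1 := n1 a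
    have h2 : a ∈ X (k + 1) → a ∉ Xup X k := fun h h' => Set.disjoint_left.1 hd h' h
    simp only [Xup, Set.mem_union, Set.mem_inter_iff] at *
    tauto
  · intro ho
    have hk : (k + 1) % 2 = 1 := Nat.odd_iff.1 ho
    simp only [qbfVal, hk, if_true]
    constructor
    · rintro h ⟨I, hI⟩
      obtain ⟨N, n1, n2, n3⟩ := H.ex (ovr ∅ (X (k + 1)) I)
      exact n3.1 (h N n2) hI
    · intro h M hM
      by_contra hc
      exact h ⟨M, (qc k _ _ (Agr.ovr_left (top _ _))).2 (H.neg M hM hc)⟩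
  · intro he
    have hk : (k + 1) % 2 = 0 := Nat.even_iff.1 he
    simp only [qbfVal, hk, zero_ne_one, if_false]
    constructor
    · intro h I
      obtain ⟨N, n1, n2, n3⟩ := H.ex (ovr ∅ (X (k + 1)) I)
      by_contra hc
      exact h N n2 (n3.2 hc)
    · intro h M hM hc
      exact H.pos (HP (by omega)) M hM hc ((qc k _ _ (Agr.ovr_left (top _ _))).1 (h M))

end NestedCirc
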